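/- Let F = x_0^{d_0} ⋯ x_n^{d_n} with 0 < d_0 ≤ ⋯ ≤ d_n, d = Σ d_i, let F = ℓ_1^d + ⋯ + ℓ_r^d with r = R(F), let I ⊂ S = ℂ[α_0,…,α_n] be the homogeneous vanishing ideal of {[ℓ_1],…,[ℓ_r]} ⊂ ℙ^n, let J = (α_1^{d_1+1},…,α_n^{d_n+1}), and set q_t = dim_ℂ(I_t ∩ α_0·S_{t−1}). Then for all integers t, q_t ≤ dim_ℂ J_{t−1}. -/

import Mathlib

/-!
Let `K = (I : α_0)`; multiplication by `α_0` identifies `K_{t-1}` with `I_t ∩ α_0 S_{t-1}`, so the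
claim is `dim K_s ≤ dim J_s`. Discard from `p ∈ K_s` the monomials outside the monomial ideal `J`.
This is a linear map `K_s → J_s`, and it is enough that it is injective
(`eq_zero_of_coeff_eq_zero`).

So let `p ∈ K_s` have no monomial in `J`, that is, every monomial of `p` has `α_i`-exponent at most
`d_i` for all `i ≥ 1`. A monomial `m` of `p` without `α_0` then satisfies `m + e_0 ≤ d`, because
`d_0 ≥ 1`, and `m + e_0` is a monomial of `α_0 p ∈ I`. Apolarity
(`coeff_eq_zero_of_forall_eval_eq_zero`, `coeff_eq_zero_of_le`) says that no homogeneous form of `I`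
contains a monomial dividing `α^d`: compare coefficients in the decomposition of `x^d`.
Hence `α_0 ∣ p`. Since `I` is a vanishing ideal, `α_0² p' ∈ I` gives `α_0 p' ∈ I`, so `p / α_0` lies
in `K_{s-1}`, and induction on `s` yields `p = 0`.
-/


open MvPolynomial

/-- The space `S_k` of homogeneous polynomials of degree `k` in `ℂ[α_0,…,α_n]`,
indexed by an integer `k` (with `S_k = 0` for `k < 0`). -/
noncomputable def homZ (n : ℕ) (k : ℤ) : Submodule ℂ (MvPolynomial (Fin (n + 1)) ℂ) :=
  if 0 ≤ k then homogeneousSubmodule (Fin (n + 1)) ℂ k.toNat else ⊥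

/-- The degree-`k` homogeneous component of an ideal, for an integer `k`. -/
noncomputable def idealZ {n : ℕ} (I : Ideal (MvPolynomial (Fin (n + 1)) ℂ)) (k : ℤ) :
    Submodule ℂ (MvPolynomial (Fin (n + 1)) ℂ) :=
  Submodule.restrictScalars ℂ I ⊓ homZ n k

/-- `q_t = dim(I_t ∩ α_0·S_{t−1})`, where `I` is the vanishing ideal of the points
of a Waring decomposition. -/
noncomputable def qdim {n : ℕ} (I : Ideal (MvPolynomial (Fin (n + 1)) ℂ)) (t : ℤ) : ℕ :=
  Module.finrank ℂ
    ↥(idealZ I t ⊓ (homZ n (t - 1)).map (LinearMap.mulLeft ℂ (X 0)))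

/-- Apolarity: pairing a form `g` of degree `|d|` with both sides of the decomposition
`x^d = ∑ ℓ_j^{|d|}` shows that the `d`-th coefficient of `g` is, up to a multinomial coefficient,
`∑ g(ℓ_j)`. -/
lemma coeff_eq_zero_of_forall_eval_eq_zero {σ : Type*} [Fintype σ] {r : ℕ} (d : σ →₀ ℕ)
    (ℓ : Fin r → σ → ℂ)
    (hdec : (monomial d 1 : MvPolynomial σ ℂ) = ∑ j, (∑ i, ℓ j i • X i) ^ d.degree)
    (g : MvPolynomial σ ℂ) (hg : g.IsHomogeneous d.degree) (h0 : ∀ j, eval (ℓ j) g = 0) :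
    coeff d g = 0 := by
  classical
  have key (s : σ →₀ ℕ) (hs : s.degree = d.degree) :
      (if d = s then (1 : ℂ) else 0) = s.multinomial * ∑ j, ∏ i, ℓ j i ^ s i := by
    have h := congrArg (coeff s) hdec
    have hs' : s.sum (fun _ m ↦ m) = d.degree := hs
    rw [coeff_monomial] at h
    rw [h, coeff_sum, Finset.mul_sum]
    refine Finset.sum_congr rfl fun j _ => ?_
    rw [coeff_linearCombination_X_pow_of_fintype, if_pos hs',
      Finsupp.prod_fintype _ _ (fun _ => pow_zero _)]
  have hmult (s : σ →₀ ℕ) : (s.multinomial : ℂ) ≠ 0 := by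
    rw [Finsupp.multinomial_eq]
    exact_mod_cast (Nat.multinomial_pos _ _).ne'
  have hsum : ∑ s ∈ g.support, coeff s g * ∑ j, ∏ i, ℓ j i ^ s i = 0 := by
    simp_rw [Finset.mul_sum]
    rw [Finset.sum_comm]
    refine Finset.sum_eq_zero fun j _ => ?_
    rw [← eval_eq', h0]
  by_contra hne
  rw [Finset.sum_eq_single d] at hsum
  · have hk := key d rfl
    rcases mul_eq_zero.mp hsum with h | h
    · exact hne h
    · simp [h] at hk
  · intro s hs hsd
    have hk := key s (by
      by_contra hdeg
      exact (mem_support_iff.mp hs) (hg.coeff_eq_zero hdeg))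
    rw [if_neg (Ne.symm hsd), eq_comm, mul_eq_zero] at hk
    rw [hk.resolve_left (hmult s), mul_zero]
  · intro h
    exact absurd (notMem_support_iff.mp h) hne

/-- A form vanishing at all `ℓ_j` contains no monomial dividing `α^d`: multiply by the
complementary monomial to reach degree `|d|`. -/
lemma coeff_eq_zero_of_le {σ : Type*} [Fintype σ] {r : ℕ} (d : σ →₀ ℕ)
    (ℓ : Fin r → σ → ℂ)
    (hdec : (monomial d 1 : MvPolynomial σ ℂ) = ∑ j, (∑ i, ℓ j i • X i) ^ d.degree)
    {k : ℕ} (g : MvPolynomial σ ℂ) (hg : g.IsHomogeneous k) (h0 : ∀ j, eval (ℓ j) g = 0)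
    {m : σ →₀ ℕ} (hm : m ≤ d) : coeff m g = 0 := by
  by_cases hk : m.degree = k
  · subst hk
    have hdm : d - m + m = d := tsub_add_cancel_of_le hm
    have h := coeff_eq_zero_of_forall_eval_eq_zero d ℓ hdec (monomial (d - m) 1 * g)
      (by
        have h1 := (isHomogeneous_monomial (1 : ℂ) (rfl : (d - m).degree = _)).mul hg
        rwa [← map_add, hdm] at h1)
      (fun j => by rw [map_mul, h0, mul_zero])
    have h2 := coeff_monomial_mul m (d - m) (1 : ℂ) g
    rw [hdm, h, one_mul] at h2
    exact h2.symm
  · exact hg.coeff_eq_zero hk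

/-- A form `p ∈ (I : α_0)` none of whose monomials lies in `J` is zero; here membership in the
vanishing ideal `I` is spelled out as vanishing at the multiples of the `ℓ_j`. -/
lemma eq_zero_of_coeff_eq_zero {n r : ℕ} (d : Fin (n + 1) →₀ ℕ) (hpos : 0 < d 0)
    (ℓ : Fin r → Fin (n + 1) → ℂ)
    (hdec : (monomial d 1 : MvPolynomial (Fin (n + 1)) ℂ)
      = ∑ j, (∑ i, ℓ j i • X i) ^ d.degree)
    (s : ℕ) (p : MvPolynomial (Fin (n + 1)) ℂ) (hp : p.IsHomogeneous s)
    (h0 : ∀ j, ∀ c : ℂ, c ≠ 0 → eval (fun i => c * ℓ j i) (X 0 * p) = 0)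
    (hJ : ∀ m : Fin (n + 1) →₀ ℕ, (∃ i : Fin n, d i.succ + 1 ≤ m i.succ) → coeff m p = 0) :
    p = 0 := by
  classical
  have hz (p : MvPolynomial (Fin (n + 1)) ℂ) (s : ℕ) (hp : p.IsHomogeneous s)
      (h0 : ∀ j, ∀ c : ℂ, c ≠ 0 → eval (fun i => c * ℓ j i) (X 0 * p) = 0)
      (hJ : ∀ m : Fin (n + 1) →₀ ℕ, (∃ i : Fin n, d i.succ + 1 ≤ m i.succ) → coeff m p = 0)
      (m : Fin (n + 1) →₀ ℕ) (hm : m 0 = 0) : coeff m p = 0 := by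
    by_cases hi : ∃ i : Fin n, d i.succ + 1 ≤ m i.succ
    · exact hJ m hi
    · push Not at hi
      have hle : Finsupp.single 0 1 + m ≤ d := by
        intro i
        refine Fin.cases ?_ (fun i => ?_) i
        · simp [hm]; omega
        · have := hi i
          simp; omega
      have h := coeff_eq_zero_of_le d ℓ hdec (X 0 * p) ((isHomogeneous_X ℂ 0).mul hp)
        (fun j => by simpa using h0 j 1 one_ne_zero) hle
      rwa [coeff_X_mul] at h
  induction s generalizing p with
  | zero =>
    ext m
    rw [coeff_zero]
    by_cases hm : m 0 = 0
    · exact hz p 0 hp h0 hJ m hm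
    · refine hp.coeff_eq_zero fun h => hm ?_
      rw [Finsupp.degree_eq_zero_iff] at h
      simp [h]
  | succ s ih =>
    have hdvd : (X 0 : MvPolynomial (Fin (n + 1)) ℂ) ∣ p := by
      rw [X_dvd_iff_modMonomial_eq_zero]
      ext m
      rw [coeff_zero]
      by_cases hm : Finsupp.single 0 1 ≤ m
      · exact coeff_modMonomial_of_le _ hm
      · rw [coeff_modMonomial_of_not_le _ hm]
        refine hz p _ hp h0 hJ m ?_
        rw [Finsupp.single_le_iff] at hm
        omega
    obtain ⟨q, rfl⟩ := hdvd
    have hq : q = 0 := by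
      refine ih q ?_ ?_ ?_
      · intro m hm
        have h := hp (d := Finsupp.single 0 1 + m) (by rwa [coeff_X_mul])
        rw [Pi.one_def, ← Finsupp.degree_eq_weight_one] at *
        rw [map_add, Finsupp.degree_single] at h
        omega
      · intro j c hc
        -- The point condition is radical: `α_0 · (α_0 q)` and `α_0 q` have the same zeros.
        have h := h0 j c hc
        simp only [map_mul, eval_X, mul_eq_zero] at h ⊢
        tauto
      · rintro m ⟨i, hi⟩
        have h := hJ (Finsupp.single 0 1 + m) ⟨i, by simp; omega⟩
        rwa [coeff_X_mul] at h
    rw [hq, mul_zero]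

/-- The linear projection of the polynomial ring onto the span of the monomials with exponents
in `A`. -/
noncomputable def monomialProj {σ : Type*} (A : Set (σ →₀ ℕ)) [DecidablePred (· ∈ A)] :
    MvPolynomial σ ℂ →ₗ[ℂ] MvPolynomial σ ℂ :=
  (basisMonomials σ ℂ).constr ℂ fun m => if m ∈ A then monomial m 1 else 0

lemma coeff_monomialProj {σ : Type*} (A : Set (σ →₀ ℕ)) [DecidablePred (· ∈ A)]
    (m : σ →₀ ℕ) (p : MvPolynomial σ ℂ) :
    coeff m (monomialProj A p) = if m ∈ A then coeff m p else 0 := by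
  classical
  have hmon (k : σ →₀ ℕ) : monomialProj A (monomial k 1) = if k ∈ A then monomial k 1 else 0 := by
    have h := (basisMonomials σ ℂ).constr_basis ℂ
      (fun m => if m ∈ A then (monomial m 1 : MvPolynomial σ ℂ) else 0) k
    rwa [coe_basisMonomials] at h
  induction p using MvPolynomial.induction_on' with
  | monomial k a =>
    have h : (monomial k a : MvPolynomial σ ℂ) = a • monomial k 1 := by simp [smul_monomial]
    rw [h, map_smul, hmon, coeff_smul, coeff_smul]
    by_cases hkm : k = m
    · subst hkm; split_ifs <;> simp
    · split_ifs <;> simp [coeff_monomial, hkm]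
  | add p q hp hq =>
    rw [map_add, coeff_add, hp, hq, coeff_add]
    split_ifs <;> simp

/-- Membership in the monomial ideal `J` is a condition on the support. -/
lemma mem_span_X_pow_of_support {n : ℕ} (d : Fin (n + 1) → ℕ)
    (p : MvPolynomial (Fin (n + 1)) ℂ)
    (hp : ∀ m, coeff m p ≠ 0 → ∃ i : Fin n, d i.succ + 1 ≤ m i.succ) :
    p ∈ Ideal.span (Set.range fun i : Fin n =>
        (X i.succ : MvPolynomial (Fin (n + 1)) ℂ) ^ (d i.succ + 1)) := by
  rw [p.as_sum]
  refine Ideal.sum_mem _ fun m hm => ?_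
  obtain ⟨i, hi⟩ := hp m (mem_support_iff.mp hm)
  refine Ideal.mem_of_dvd _ ?_ (Ideal.subset_span ⟨i, rfl⟩)
  dsimp only
  rw [X_pow_eq_monomial, monomial_dvd_monomial]
  exact ⟨Or.inr (Finsupp.single_le_iff.mpr hi), one_dvd _⟩

/-- For the vanishing ideal `I` of a Waring decomposition of the monomial
`x_0^{d_0} ⋯ x_n^{d_n}` and `J = (α_1^{d_1+1},…,α_n^{d_n+1})`, we have
`q_t ≤ dim J_{t−1}` for all integers `t`. -/
theorem qdim_le_dim_J (n : ℕ) (hn : 1 ≤ n)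
    (d : Fin (n + 1) → ℕ) (hmono : Monotone d) (hpos : 0 < d 0)
    (r : ℕ) (hr : r = ∏ i ∈ Finset.univ.erase 0, (d i + 1))
    (ℓ : Fin r → (Fin (n + 1) → ℂ))
    (hdec : (∏ i, X i ^ d i : MvPolynomial (Fin (n + 1)) ℂ)
        = ∑ j, (∑ i, C (ℓ j i) * X i) ^ (∑ i, d i))
    (hmin : IsLeast {s : ℕ | ∃ m : Fin s → (Fin (n + 1) → ℂ),
        (∏ i, X i ^ d i : MvPolynomial (Fin (n + 1)) ℂ)
          = ∑ j, (∑ i, C (m j i) * X i) ^ (∑ i, d i)} r)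
    (I : Ideal (MvPolynomial (Fin (n + 1)) ℂ))
    (hI : ∀ p : MvPolynomial (Fin (n + 1)) ℂ,
      p ∈ I ↔ ∀ (j : Fin r) (c : ℂ), c ≠ 0 → eval (fun i => c * ℓ j i) p = 0) :
    ∀ t : ℤ, qdim I t ≤ Module.finrank ℂ
      (idealZ (Ideal.span (Set.range fun i : Fin n =>
        (X i.succ : MvPolynomial (Fin (n + 1)) ℂ) ^ (d i.succ + 1))) (t - 1)) := by
  classical
  intro t
  set J : Ideal (MvPolynomial (Fin (n + 1)) ℂ) := Ideal.span (Set.range fun i : Fin n =>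
        (X i.succ : MvPolynomial (Fin (n + 1)) ℂ) ^ (d i.succ + 1)) with hJdef
  by_cases ht : 0 ≤ t - 1
  swap
  · have hH : homZ n (t - 1) = ⊥ := if_neg ht
    rw [qdim, hH, Submodule.map_bot, inf_bot_eq, finrank_bot]
    exact Nat.zero_le _
  obtain ⟨s, hs⟩ := Int.eq_ofNat_of_zero_le ht
  have hH : homZ n (t - 1) = homogeneousSubmodule (Fin (n + 1)) ℂ s := by
    rw [homZ, if_pos ht, hs]; rfl
  let D : Fin (n + 1) →₀ ℕ := Finsupp.equivFunOnFinite.symm d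
  have hdec' : (monomial D 1 : MvPolynomial (Fin (n + 1)) ℂ)
      = ∑ j, (∑ i, ℓ j i • X i) ^ D.degree := by
    have h1 : D.degree = ∑ i, d i := by
      rw [Finsupp.degree_eq_sum]; rfl
    have h2 : (monomial D 1 : MvPolynomial (Fin (n + 1)) ℂ) = ∏ i, X i ^ d i := by
      rw [monomial_eq, Finsupp.prod_fintype _ _ (fun _ => pow_zero _)]
      simp [D]
    rw [h1, h2, hdec]
    simp_rw [smul_eq_C_mul]
  have hfin : Module.Finite ℂ (homogeneousSubmodule (Fin (n + 1)) ℂ s) :=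
    Module.Finite.iff_fg.mpr (homogeneousSubmodule_fg _ _ _)
  -- The degree `s` component of the colon ideal `(I : α_0)`.
  let K : Submodule ℂ (MvPolynomial (Fin (n + 1)) ℂ) :=
    (Submodule.restrictScalars ℂ I).comap (LinearMap.mulLeft ℂ (X 0)) ⊓
      homogeneousSubmodule (Fin (n + 1)) ℂ s
  have hKfin : Module.Finite ℂ K := Submodule.finiteDimensional_of_le inf_le_right
  have hJfin : Module.Finite ℂ (idealZ J (t - 1)) := by
    rw [idealZ, hH]
    exact Submodule.finiteDimensional_of_le inf_le_right
  have hle : idealZ I t ⊓ (homZ n (t - 1)).map (LinearMap.mulLeft ℂ (X 0))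
      ≤ K.map (LinearMap.mulLeft ℂ (X 0)) := by
    rintro _ ⟨hp, q, hq, rfl⟩
    rw [hH] at hq
    exact ⟨q, ⟨hp.1, hq⟩, rfl⟩
  refine (Submodule.finrank_mono hle).trans ((Submodule.finrank_map_le _ _).trans ?_)
  let A : Set (Fin (n + 1) →₀ ℕ) := {m | ∃ i : Fin n, d i.succ + 1 ≤ m i.succ}
  have hmaps : ∀ p ∈ K, monomialProj A p ∈ idealZ J (t - 1) := by
    rintro p ⟨-, hp⟩
    rw [idealZ, hH]
    refine ⟨mem_span_X_pow_of_support d _ fun m hm => ?_, fun m hm => ?_⟩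
    · rw [coeff_monomialProj] at hm
      by_contra h
      exact hm (if_neg h)
    · rw [coeff_monomialProj] at hm
      exact hp (fun h => hm (by simp [h]))
  refine LinearMap.finrank_le_finrank_of_injective
    (f := (monomialProj A).restrict hmaps) ?_
  rw [← LinearMap.ker_eq_bot, LinearMap.ker_eq_bot']
  rintro ⟨p, hpI, hp⟩ hp0
  have hp0' : monomialProj A p = 0 := congrArg Subtype.val hp0
  refine Subtype.ext (eq_zero_of_coeff_eq_zero D hpos ℓ hdec' s p hp ((hI _).mp hpI) ?_)
  intro m hm
  have h := coeff_monomialProj A m p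
  rw [hp0', if_pos (show m ∈ A from hm), coeff_zero] at h
  exact h.symm
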